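/- Let n ≥ 1 be even. Then ∑_{d|n} c_d(n/d)·(-1)^{n/d} equals m if n = m² is a perfect square; equals 2m if n = 2m² with m an odd positive integer (i.e. n/2 is an odd perfect square); and equals 0 otherwise. -/

import Mathlib

/-- The Ramanujan sum `c_d(r)`: the sum of the `r`-th powers of all primitive
`d`-th roots of unity. -/
noncomputable def ramanujanSum (d r : ℕ) : ℂ :=
  ∑ m ∈ (Finset.range d).filter (fun m => Nat.gcd m d = 1),
    Complex.exp (2 * Real.pi * Complex.I * ((m : ℂ) * (r : ℂ) / (d : ℂ)))

theorem ram_eq (d r : ℕ) (hd : 0 < d) :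
    ramanujanSum d r = ∑ z ∈ primitiveRoots d ℂ, z ^ r := by
  have hp := Complex.isPrimitiveRoot_exp d hd.ne'
  have : NeZero d := ⟨hd.ne'⟩
  unfold ramanujanSum
  refine Finset.sum_bij (fun m _ => Complex.exp (2 * Real.pi * Complex.I / d) ^ m) ?_ ?_ ?_ ?_
  · intro m hm
    rw [Finset.mem_filter] at hm
    rw [mem_primitiveRoots hd]
    exact hp.pow_of_coprime m hm.2
  · intro a ha b hb h
    simp only [Finset.mem_filter, Finset.mem_range] at ha hb
    exact hp.pow_inj ha.1 hb.1 h
  · intro z hz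
    rw [mem_primitiveRoots hd] at hz
    obtain ⟨i, hi, hc, rfl⟩ := hp.isPrimitiveRoot_iff.1 hz
    exact ⟨i, by simp [hi]; exact hc, rfl⟩
  · intro m hm
    rw [← pow_mul, ← Complex.exp_nat_mul]
    congr 1
    push_cast
    ring

theorem sum_nthRoots (d r : ℕ) (hd : 0 < d) :
    ∑ z ∈ Polynomial.nthRootsFinset d (1 : ℂ), z ^ r = if d ∣ r then (d : ℂ) else 0 := by
  have hp := Complex.isPrimitiveRoot_exp d hd.ne'
  have : NeZero d := ⟨hd.ne'⟩
  set w := Complex.exp (2 * Real.pi * Complex.I / d) with hw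
  split_ifs with h
  · rw [Finset.sum_congr rfl (g := fun _ => (1 : ℂ))]
    · simp [hp.card_nthRootsFinset]
    · intro z hz
      rw [Polynomial.mem_nthRootsFinset hd] at hz
      obtain ⟨k, rfl⟩ := h
      rw [pow_mul, hz, one_pow]
  · have h1 : w ^ r ≠ 1 := fun h' => h (hp.dvd_of_pow_eq_one r h')
    have hw0 : w ≠ 0 := hp.ne_zero hd.ne'
    have h2 : ∑ z ∈ Polynomial.nthRootsFinset d (1 : ℂ), z ^ r
        = ∑ z ∈ Polynomial.nthRootsFinset d (1 : ℂ), (w * z) ^ r := by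
      symm
      refine Finset.sum_bij' (fun z _ => w * z) (fun z _ => w⁻¹ * z) ?_ ?_ ?_ ?_ ?_
      · intro z hz
        rw [Polynomial.mem_nthRootsFinset hd] at hz ⊢
        rw [mul_pow, hz, hp.pow_eq_one, one_mul]
      · intro z hz
        rw [Polynomial.mem_nthRootsFinset hd] at hz ⊢
        rw [mul_pow, hz, inv_pow, hp.pow_eq_one, inv_one, one_mul]
      · intro z hz
        field_simp
      · intro z hz
        field_simp
      · intro z hz
        rfl
    simp_rw [mul_pow] at h2
    rw [← Finset.mul_sum] at h2
    have h3 : (w ^ r - 1) * ∑ z ∈ Polynomial.nthRootsFinset d (1 : ℂ), z ^ r = 0 := by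
      linear_combination -h2
    exact (mul_eq_zero.1 h3).resolve_left (sub_ne_zero.2 h1)

theorem sum_ram (d r : ℕ) (hd : 0 < d) :
    ∑ i ∈ d.divisors, ramanujanSum i r = if d ∣ r then (d : ℂ) else 0 := by
  rw [← sum_nthRoots d r hd]
  have hp := Complex.isPrimitiveRoot_exp d hd.ne'
  have : NeZero d := ⟨hd.ne'⟩
  have : NeZero d := ⟨hd.ne'⟩
  rw [IsPrimitiveRoot.nthRoots_one_eq_biUnion_primitiveRoots, Finset.sum_biUnion]
  · refine Finset.sum_congr rfl fun i hi => ram_eq i r (Nat.pos_of_mem_divisors hi)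
  · intro a _ b _ hab
    exact IsPrimitiveRoot.disjoint hab

theorem ram_moebius (d r : ℕ) (hd : 0 < d) :
    ramanujanSum d r = ∑ x ∈ d.divisorsAntidiagonal,
      (ArithmeticFunction.moebius x.1 : ℂ) * if x.2 ∣ r then (x.2 : ℂ) else 0 :=
  ((ArithmeticFunction.sum_eq_iff_sum_mul_moebius_eq
    (f := fun d => ramanujanSum d r) (g := fun d => if d ∣ r then (d : ℂ) else 0)).1
    (fun n hn => sum_ram n r hn) d hd).symm

noncomputable def auxF (e s : ℕ) : ℂ :=
  if Even e then (if s = e then 1 else 0)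
  else 2 * (if s = 2 * e then 1 else 0) - (if s = e then 1 else 0)

theorem auxF_sum (e s : ℕ) (hs : 0 < s) :
    ∑ i ∈ s.divisors, auxF e i = if e ∣ s then (-1 : ℂ) ^ s else 0 := by
  unfold auxF
  by_cases he : Even e
  · simp only [he, if_true, Finset.sum_ite_eq', Nat.mem_divisors]
    by_cases h : e ∣ s
    · have : Even s := he.trans_dvd h
      simp [h, hs.ne', this]
    · simp [h]
  · simp only [he, if_false, Finset.sum_sub_distrib, ← Finset.mul_sum, Finset.sum_ite_eq',
      Nat.mem_divisors]
    have hodd := Nat.not_even_iff_odd.1 he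
    by_cases h : e ∣ s
    · by_cases h2 : Even s
      · have : 2 * e ∣ s := Nat.Coprime.mul_dvd_of_dvd_of_dvd
          (Nat.coprime_two_left.2 hodd) h2.two_dvd h
        simp [h, hs.ne', h2, this]; norm_num
      · have : ¬ 2 * e ∣ s := fun h' => h2 (even_iff_two_dvd.2 ((dvd_mul_right 2 e).trans h'))
        simp [h, hs.ne', (Nat.not_even_iff_odd.1 h2).neg_one_pow, this]
    · have : ¬ 2 * e ∣ s := fun h' => h ((dvd_mul_left e 2).trans h')
      simp [h, this]

theorem auxF_moebius (e s : ℕ) (hs : 0 < s) :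
    ∑ x ∈ s.divisorsAntidiagonal, (ArithmeticFunction.moebius x.1 : ℂ) *
      (if e ∣ x.2 then (-1 : ℂ) ^ x.2 else 0) = auxF e s :=
  (ArithmeticFunction.sum_eq_iff_sum_mul_moebius_eq
    (f := fun s => auxF e s) (g := fun s => if e ∣ s then (-1 : ℂ) ^ s else 0)).1
    (fun n hn => auxF_sum e n hn) s hs

theorem reorg (n : ℕ) (F : ℕ → ℕ → ℕ → ℂ) :
    ∑ x ∈ n.divisorsAntidiagonal, ∑ y ∈ x.1.divisorsAntidiagonal, F y.1 y.2 x.2 =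
    ∑ x ∈ n.divisorsAntidiagonal, ∑ y ∈ x.2.divisorsAntidiagonal, F y.1 x.1 y.2 := by
  simp only [Finset.sum_sigma']
  refine Finset.sum_nbij' (fun ⟨⟨_, j⟩, ⟨k, l⟩⟩ ↦ ⟨(l, k * j), (k, j)⟩)
    (fun ⟨⟨i, _⟩, ⟨k, l⟩⟩ ↦ ⟨(k * i, l), (k, i)⟩) ?_ ?_ ?_ ?_ ?_
  · rintro ⟨⟨i, j⟩, ⟨k, l⟩⟩ h
    simp only [Finset.mem_sigma, Nat.mem_divisorsAntidiagonal] at h ⊢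
    obtain ⟨⟨rfl, h1⟩, rfl, h2⟩ := h
    refine ⟨⟨by ring, h1⟩, trivial, ?_⟩
    intro h; apply h1; rw [mul_right_comm, h, zero_mul]
  · rintro ⟨⟨i, j⟩, ⟨k, l⟩⟩ h
    simp only [Finset.mem_sigma, Nat.mem_divisorsAntidiagonal] at h ⊢
    obtain ⟨⟨rfl, h1⟩, rfl, h2⟩ := h
    refine ⟨⟨by ring, h1⟩, trivial, ?_⟩
    intro h; apply h1; rw [← mul_assoc, mul_comm i, h, zero_mul]
  · rintro ⟨⟨i, j⟩, ⟨k, l⟩⟩ h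
    simp only [Finset.mem_sigma, Nat.mem_divisorsAntidiagonal] at h ⊢
    obtain ⟨⟨rfl, h1⟩, rfl, h2⟩ := h
    rfl
  · rintro ⟨⟨i, j⟩, ⟨k, l⟩⟩ h
    simp only [Finset.mem_sigma, Nat.mem_divisorsAntidiagonal] at h ⊢
    obtain ⟨⟨rfl, h1⟩, rfl, h2⟩ := h
    rfl
  · rintro ⟨⟨i, j⟩, ⟨k, l⟩⟩ h
    rfl

theorem total (n : ℕ) :
    ∑ d ∈ n.divisors, ramanujanSum d (n / d) * (-1 : ℂ) ^ (n / d) =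
      ∑ x ∈ n.divisorsAntidiagonal, (x.1 : ℂ) * auxF x.1 x.2 := by
  rw [← Nat.sum_divisorsAntidiagonal (f := fun d r => ramanujanSum d r * (-1 : ℂ) ^ r)]
  have key := reorg n (fun a e r => (ArithmeticFunction.moebius a : ℂ) *
    (if e ∣ r then (e : ℂ) else 0) * (-1 : ℂ) ^ r)
  have hpos : ∀ x ∈ n.divisorsAntidiagonal, 0 < x.1 ∧ 0 < x.2 := by
    intro x hx
    rw [Nat.mem_divisorsAntidiagonal] at hx
    constructor <;> (apply Nat.pos_of_ne_zero; intro h; apply hx.2; rw [← hx.1, h]; simp)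
  calc _ = _ := ?_
    _ = _ := key
    _ = _ := ?_
  · refine Finset.sum_congr rfl fun x hx => ?_
    rw [ram_moebius _ _ (hpos x hx).1, Finset.sum_mul]
  · refine Finset.sum_congr rfl fun x hx => ?_
    rw [← auxF_moebius _ _ (hpos x hx).2, Finset.mul_sum]
    refine Finset.sum_congr rfl fun y hy => ?_
    split_ifs <;> ring

theorem stmt_9 (n : ℕ) (hn : 1 ≤ n) (heven : Even n) :
    (∀ m : ℕ, n = m ^ 2 →
      ∑ d ∈ n.divisors, ramanujanSum d (n / d) * (-1 : ℂ) ^ (n / d) = (m : ℂ)) ∧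
    (∀ m : ℕ, 0 < m → Odd m → n = 2 * m ^ 2 →
      ∑ d ∈ n.divisors, ramanujanSum d (n / d) * (-1 : ℂ) ^ (n / d) = 2 * (m : ℂ)) ∧
    ((¬ ∃ m : ℕ, n = m ^ 2) → (¬ ∃ m : ℕ, Odd m ∧ n = 2 * m ^ 2) →
      ∑ d ∈ n.divisors, ramanujanSum d (n / d) * (-1 : ℂ) ^ (n / d) = 0) := by
  rw [total]
  -- a nonzero term is one of the two kinds
  have hz : ∀ x ∈ n.divisorsAntidiagonal, (x.1 : ℂ) * auxF x.1 x.2 ≠ 0 →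
      (Even x.1 ∧ x.2 = x.1 ∧ n = x.1 ^ 2) ∨ (Odd x.1 ∧ x.2 = 2 * x.1 ∧ n = 2 * x.1 ^ 2) := by
    rintro ⟨e, s⟩ hx h
    rw [Nat.mem_divisorsAntidiagonal] at hx
    have h' : auxF e s ≠ 0 := right_ne_zero_of_mul h
    obtain ⟨hx, -⟩ := hx
    simp only at hx ⊢
    unfold auxF at h'
    by_cases he : Even e
    · left
      by_cases hs : s = e
      · exact ⟨he, hs, by rw [← hx, hs]; ring⟩
      · simp [he, hs] at h'
    · right
      have ho := Nat.not_even_iff_odd.1 he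
      by_cases hs : s = 2 * e
      · exact ⟨ho, hs, by rw [← hx, hs]; ring⟩
      · by_cases hs' : s = e
        · rw [← hx, hs'] at heven
          exact absurd heven (Nat.not_even_iff_odd.2 (ho.mul ho))
        · simp [he, hs, hs'] at h'
  have hmix : ∀ a b : ℕ, Even a → Odd b → a ^ 2 ≠ 2 * b ^ 2 := by
    rintro a b ⟨k, rfl⟩ hb h
    have : b ^ 2 = 2 * k ^ 2 := by nlinarith
    have h1 : Odd (b ^ 2) := hb.pow
    rw [this] at h1
    exact (Nat.not_even_iff_odd.2 h1) (even_two_mul _)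
  refine ⟨?_, ?_, ?_⟩
  · intro m hm
    have hme : Even m := by
      rw [hm] at heven
      exact (Nat.even_pow.1 heven).1
    rw [Finset.sum_eq_single (m, m)]
    · simp [auxF, hme]
    · intro x hx hne
      by_contra h
      rcases hz x hx h with ⟨h1, h2, h3⟩ | ⟨h1, h2, h3⟩
      · have : x.1 = m := Nat.pow_left_injective (n := 2) (by norm_num) (h3.symm.trans hm)
        exact hne (Prod.ext this (h2.trans this))
      · exact hmix m x.1 hme h1 (hm.symm.trans h3)
    · intro h
      exact absurd (Nat.mem_divisorsAntidiagonal.2 ⟨by simp [hm, sq], by omega⟩) h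
  · intro m hm0 hmo hm
    rw [Finset.sum_eq_single (m, 2 * m)]
    · have h1 : 2 * m ≠ m := by omega
      simp [auxF, Nat.not_even_iff_odd.2 hmo, hm0.ne']
      ring
    · intro x hx hne
      by_contra h
      rcases hz x hx h with ⟨h1, h2, h3⟩ | ⟨h1, h2, h3⟩
      · exact hmix x.1 m h1 hmo (h3.symm.trans hm)
      · have : x.1 = m := Nat.pow_left_injective (n := 2) (by norm_num) (by
          show x.1 ^ 2 = m ^ 2
          omega)
        exact hne (Prod.ext this (by rw [h2, this]))
    · intro h
      exact absurd (Nat.mem_divisorsAntidiagonal.2 ⟨by rw [hm]; ring, by omega⟩) h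
  · intro h1 h2
    refine Finset.sum_eq_zero fun x hx => ?_
    by_contra h
    rcases hz x hx h with ⟨_, _, h3⟩ | ⟨h4, _, h3⟩
    · exact h1 ⟨_, h3⟩
    · exact h2 ⟨_, h4, h3⟩
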